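/- arXiv:1310.5428 — 3 statements merged into one kernel-verified Lean document; each statement's English description precedes it below -/
import Mathlib

section
/- The Stieltjes transform of the Marčenko–Pastur law with ratio parameter y ∈ (0,∞) and scale σ² satisfies m_g(z) = (σ²(1-y) - z + √((z - σ² - yσ²)² - 4yσ⁴)) / (2yzσ²) for all z in the upper half plane, where the square root branch is chosen so that m_g(z) has positive imaginary part. -/
open MeasureTheory Complex

/-- Density of the Marčenko–Pastur law with ratio `y` and scale `σ2`. -/
noncomputable def mpDensity (y σ2 : ℝ) (x : ℝ) : ℝ :=
  if σ2 * (1 - Real.sqrt y)^2 ≤ x ∧ x ≤ σ2 * (1 + Real.sqrt y)^2 then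
    (1 / (2 * Real.pi * x * y * σ2)) *
      Real.sqrt ((σ2 * (1 + Real.sqrt y)^2 - x) * (x - σ2 * (1 - Real.sqrt y)^2))
  else 0

/-- The Marčenko–Pastur law with ratio `y` and scale `σ2`: absolutely continuous
part with density `mpDensity`, plus a point mass `1 - 1/y` at the origin when `y > 1`. -/
noncomputable def mpLaw (y σ2 : ℝ) : Measure ℝ :=
  (volume.withDensity fun x => ENNReal.ofReal (mpDensity y σ2 x)) +
    (if 1 < y then (ENNReal.ofReal (1 - 1 / y)) • (Measure.dirac (0 : ℝ)) else 0)

lemma one_sub_mul_ne_zero_of_norm {w u : ℂ} (hw : ‖w‖ < 1) (hu : ‖u‖ ≤ 1) : 1 - w * u ≠ 0 := by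
  intro h
  have h1 : ‖w * u‖ = 1 := by rw [← sub_eq_zero.mp h, norm_one]
  rw [norm_mul] at h1
  nlinarith [norm_nonneg w, norm_nonneg u]

/-- The Poisson-type denominator factors on the unit circle. -/
lemma one_sub_two_mul_cos_add_sq (w : ℂ) (θ : ℝ) :
    1 - 2 * w * (Real.cos θ : ℂ) + w ^ 2 = (1 - w * exp (θ * I)) * (1 - w * exp (-θ * I)) := by
  have h : exp (θ * I) * exp (-θ * I) = 1 := by rw [← Complex.exp_add]; simp
  rw [ofReal_cos, Complex.cos]
  linear_combination (-w ^ 2) * h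

lemma one_sub_two_mul_cos_add_sq_ne_zero {w : ℂ} (hw : ‖w‖ < 1) (θ : ℝ) :
    1 - 2 * w * (Real.cos θ : ℂ) + w ^ 2 ≠ 0 := by
  rw [one_sub_two_mul_cos_add_sq]
  refine mul_ne_zero (one_sub_mul_ne_zero_of_norm hw ?_) (one_sub_mul_ne_zero_of_norm hw ?_)
  · rw [norm_exp_ofReal_mul_I]
  · rw [← ofReal_neg, norm_exp_ofReal_mul_I]

lemma integral_sin_sq_div_of_norm_lt_one {w : ℂ} (hw : ‖w‖ < 1) :
    ∫ θ in (0 : ℝ)..Real.pi,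
      (Real.sin θ : ℂ) ^ 2 / (1 - 2 * w * (Real.cos θ : ℂ) + w ^ 2) = (Real.pi : ℂ) / 2 := by
  set f : ℂ → ℂ := fun u ↦ (1 - u ^ 2) / (4 * (1 - w * u)) with hf
  have hne : ∀ u : ℂ, ‖u‖ ≤ 1 → 4 * (1 - w * u) ≠ 0 := fun u hu ↦
    mul_ne_zero (by norm_num) (one_sub_mul_ne_zero_of_norm hw hu)
  have hdiff : ∀ u : ℂ, ‖u‖ ≤ 1 → DifferentiableAt ℂ f u := fun u hu ↦
    DifferentiableAt.div (by fun_prop) (by fun_prop) (hne u hu)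
  have havg : Real.circleAverage f 0 1 = f 0 :=
    circleAverage_of_differentiable_on_off_countable Set.countable_empty
      (fun u hu ↦ (hdiff u (by simpa using hu)).continuousAt.continuousWithinAt)
      (fun u hu ↦ hdiff u (by simpa using (Metric.mem_ball.mp hu.1).le))
  set g : ℝ → ℂ := fun θ ↦ f (exp (θ * I)) with hg
  have hgc : Continuous g := continuous_iff_continuousAt.mpr fun θ ↦
    ContinuousAt.comp (g := f) (hdiff _ (norm_exp_ofReal_mul_I θ).le).continuousAt
      (by fun_prop)
  have hfull : ∫ θ in (0 : ℝ)..2 * Real.pi, g θ = (Real.pi : ℂ) / 2 := by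
    have h2 : ((2 * Real.pi : ℝ) : ℂ) ≠ 0 := by exact_mod_cast Real.two_pi_pos.ne'
    have h0 : f 0 = 1 / 4 := by simp [hf]
    rw [Real.circleAverage_def, h0] at havg
    simp only [circleMap, ofReal_one, one_mul, zero_add, real_smul, ofReal_inv] at havg
    rw [inv_mul_eq_iff_eq_mul₀ h2] at havg
    rw [hg, havg]; push_cast; ring
  have hsplit : ∀ θ : ℝ, (Real.sin θ : ℂ) ^ 2 / (1 - 2 * w * (Real.cos θ : ℂ) + w ^ 2)
      = g θ + g (2 * Real.pi - θ) := by
    intro θ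
    have h1 := one_sub_mul_ne_zero_of_norm hw (norm_exp_ofReal_mul_I θ).le
    have h2 := one_sub_mul_ne_zero_of_norm hw (norm_exp_ofReal_mul_I (-θ)).le
    have h : exp (θ * I) * exp (-θ * I) = 1 := by rw [← Complex.exp_add]; simp
    have h3 : exp ((2 * Real.pi - θ : ℝ) * I) = exp (-θ * I) := by
      rw [← Complex.exp_periodic (-θ * I)]; push_cast; ring_nf
    rw [one_sub_two_mul_cos_add_sq, hg]
    simp only [hf, h3]
    push_cast at h1 h2
    rw [ofReal_sin, Complex.sin]
    generalize exp (θ * I) = u at *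
    generalize exp (-θ * I) = v at *
    have hnum : ((v - u) * I / 2) ^ 2
        = ((1 - u ^ 2) * (1 - w * v) + (1 - v ^ 2) * (1 - w * u)) / 4 := by
      linear_combination ((v - u) ^ 2 / 4) * I_sq + ((2 - w * (u + v)) / 4) * h
    rw [hnum]
    have h4 : 1 - u * w ≠ 0 := by rwa [mul_comm]
    field_simp
  simp_rw [hsplit]
  rw [intervalIntegral.integral_add (hgc.intervalIntegrable _ _)
    (Continuous.intervalIntegrable (by fun_prop) _ _),
    intervalIntegral.integral_comp_sub_left, sub_zero, two_mul, add_sub_cancel_right, ← two_mul,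
    intervalIntegral.integral_add_adjacent_intervals (hgc.intervalIntegrable _ _)
    (hgc.intervalIntegrable _ _), hfull]

lemma integral_sin_sq_div_neg_one :
    ∫ θ in (0 : ℝ)..Real.pi,
      (Real.sin θ : ℂ) ^ 2 / (1 - 2 * (-1) * (Real.cos θ : ℂ) + (-1) ^ 2) = (Real.pi : ℂ) / 2 := by
  have h : ∫ θ in (0 : ℝ)..Real.pi,
      (Real.sin θ : ℂ) ^ 2 / (1 - 2 * (-1) * (Real.cos θ : ℂ) + (-1) ^ 2)
      = ∫ θ in (0 : ℝ)..Real.pi, (((1 - Real.cos θ) / 2 : ℝ) : ℂ) := by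
    refine intervalIntegral.integral_congr_uIoo fun θ hθ ↦ ?_
    rw [Set.uIoo_of_le Real.pi_pos.le] at hθ
    have h1 : -1 < Real.cos θ := by
      rw [← Real.cos_pi]
      exact Real.cos_lt_cos_of_nonneg_of_le_pi hθ.1.le le_rfl hθ.2
    have h2 : 1 - 2 * (-1) * Real.cos θ + (-1) ^ 2 ≠ 0 := by linarith
    have h3 : Real.sin θ ^ 2 / (1 - 2 * (-1) * Real.cos θ + (-1) ^ 2) = (1 - Real.cos θ) / 2 := by
      rw [div_eq_div_iff h2 two_ne_zero, Real.sin_sq]; ring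
    simp only [← h3]; push_cast; ring
  rw [h, intervalIntegral.integral_ofReal, intervalIntegral.integral_div,
    intervalIntegral.integral_sub (by simp) (by simp)]
  simp

/-- The Stieltjes transform of the semicircle weight in trigonometric form, with the spectral
parameter written as `c + (d / 2) (w + w⁻¹)`. -/
lemma integral_sin_sq_div_affine_cos {c d : ℝ} (hd : 0 < d) {w ζ : ℂ} (hw0 : w ≠ 0)
    (hw : ‖w‖ < 1 ∨ w = -1) (hζ : ζ = c + d / 2 * (w + w⁻¹)) :
    ∫ θ in (0 : ℝ)..Real.pi, (Real.sin θ : ℂ) ^ 2 / (((c + d * Real.cos θ : ℝ) : ℂ) - ζ)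
      = -(Real.pi * w / d) := by
  have hdC : (d : ℂ) ≠ 0 := by exact_mod_cast hd.ne'
  have hint : ∫ θ in (0 : ℝ)..Real.pi,
      (Real.sin θ : ℂ) ^ 2 / (1 - 2 * w * (Real.cos θ : ℂ) + w ^ 2) = (Real.pi : ℂ) / 2 := by
    rcases hw with hw | rfl
    · exact integral_sin_sq_div_of_norm_lt_one hw
    · exact integral_sin_sq_div_neg_one
  have hpt : ∀ θ : ℝ, (Real.sin θ : ℂ) ^ 2 / (((c + d * Real.cos θ : ℝ) : ℂ) - ζ)
      = -(2 * w / d) * ((Real.sin θ : ℂ) ^ 2 / (1 - 2 * w * (Real.cos θ : ℂ) + w ^ 2)) := by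
    intro θ
    have h : ((c + d * Real.cos θ : ℝ) : ℂ) - ζ
        = -(d / (2 * w)) * (1 - 2 * w * (Real.cos θ : ℂ) + w ^ 2) := by
      rw [hζ]; push_cast; field_simp; ring
    rw [h, div_mul_eq_div_div]
    field_simp
  simp_rw [hpt]
  rw [intervalIntegral.integral_const_mul, hint]
  field_simp

lemma intervalIntegrable_sin_sq_div_affine_cos {c d : ℝ} (hd : 0 < d) {w ζ : ℂ} (hw0 : w ≠ 0)
    (hw : ‖w‖ < 1 ∨ w = -1) (hζ : ζ = c + d / 2 * (w + w⁻¹)) :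
    IntervalIntegrable
      (fun θ : ℝ ↦ (Real.sin θ : ℂ) ^ 2 / (((c + d * Real.cos θ : ℝ) : ℂ) - ζ))
      volume 0 Real.pi := by
  refine intervalIntegral.intervalIntegrable_of_integral_ne_zero ?_
  rw [integral_sin_sq_div_affine_cos hd hw0 hw hζ]
  have hdC : (d : ℂ) ≠ 0 := by exact_mod_cast hd.ne'
  have hpi : (Real.pi : ℂ) ≠ 0 := by exact_mod_cast Real.pi_ne_zero
  exact neg_ne_zero.mpr (div_ne_zero (mul_ne_zero hpi hw0) hdC)

lemma image_affine_cos_Icc {d : ℝ} (hd : 0 < d) (c : ℝ) :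
    (fun θ ↦ c + d * Real.cos θ) '' Set.Icc 0 Real.pi = Set.Icc (c - d) (c + d) := by
  have h : (fun θ ↦ c + d * Real.cos θ) = (fun t ↦ d * t + c) ∘ Real.cos := by
    funext θ; simp [add_comm]
  rw [h, Set.image_comp, Real.bijOn_cos.image_eq, Set.image_affine_Icc' hd]
  congr 1 <;> ring

lemma injOn_affine_cos {d : ℝ} (hd : 0 < d) (c : ℝ) :
    Set.InjOn (fun θ ↦ c + d * Real.cos θ) (Set.Icc 0 Real.pi) := fun _ ha _ hb hab ↦
  Real.injOn_cos ha hb (mul_left_cancel₀ hd.ne' (add_left_cancel hab))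

lemma hasDerivWithinAt_affine_cos (c d θ : ℝ) (s : Set ℝ) :
    HasDerivWithinAt (fun θ ↦ c + d * Real.cos θ) (d * -Real.sin θ) s θ :=
  (((Real.hasDerivAt_cos θ).const_mul d).const_add c).hasDerivWithinAt

lemma mp_edge_left {y σ2 : ℝ} (hy : 0 < y) :
    σ2 * (1 - Real.sqrt y) ^ 2 = σ2 * (1 + y) - 2 * σ2 * Real.sqrt y := by
  linear_combination σ2 * Real.sq_sqrt hy.le

lemma mp_edge_right {y σ2 : ℝ} (hy : 0 < y) :
    σ2 * (1 + Real.sqrt y) ^ 2 = σ2 * (1 + y) + 2 * σ2 * Real.sqrt y := by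
  linear_combination σ2 * Real.sq_sqrt hy.le

lemma mpDensity_nonneg {y σ2 : ℝ} (hy : 0 < y) (hσ : 0 < σ2) (x : ℝ) : 0 ≤ mpDensity y σ2 x := by
  unfold mpDensity
  split_ifs with h
  · have hx : 0 ≤ x := le_trans (by positivity) h.1
    positivity
  · exact le_rfl

lemma measurable_mpDensity (y σ2 : ℝ) : Measurable (mpDensity y σ2) := by
  unfold mpDensity
  exact Measurable.ite measurableSet_Icc (by fun_prop) measurable_const

/-- The change of variables `x = σ²(1 + y) + 2σ²√y cos θ` turns the Marčenko–Pastur density into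
a multiple of `sin² θ / x`. -/
lemma abs_deriv_mul_mpDensity {y σ2 : ℝ} (hy : 0 < y) (hσ : 0 < σ2) {c d : ℝ}
    (hc : c = σ2 * (1 + y)) (hd : d = 2 * σ2 * Real.sqrt y) {θ : ℝ}
    (hθ : θ ∈ Set.Icc 0 Real.pi) :
    |d * -Real.sin θ| * mpDensity y σ2 (c + d * Real.cos θ)
      = d ^ 2 / (2 * Real.pi * y * σ2) * (Real.sin θ ^ 2 / (c + d * Real.cos θ)) := by
  have hd0 : 0 < d := by rw [hd]; have := Real.sqrt_pos.mpr hy; positivity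
  have hsin := Real.sin_nonneg_of_mem_Icc hθ
  have hmem : c + d * Real.cos θ ∈ Set.Icc (c - d) (c + d) := by
    rw [← image_affine_cos_Icc hd0]; exact Set.mem_image_of_mem _ hθ
  have hsqrt : Real.sqrt ((c + d - (c + d * Real.cos θ)) * (c + d * Real.cos θ - (c - d)))
      = d * Real.sin θ := by
    rw [← Real.sqrt_sq (mul_nonneg hd0.le hsin)]
    congr 1
    rw [mul_pow, Real.sin_sq]; ring
  rw [mpDensity, mp_edge_left hy, mp_edge_right hy, ← hc, ← hd, if_pos (Set.mem_Icc.mp hmem), hsqrt, mul_neg,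
    abs_neg, abs_of_nonneg (mul_nonneg hd0.le hsin)]
  generalize c + d * Real.cos θ = x
  ring

lemma abs_deriv_smul_mpDensity_smul {y σ2 : ℝ} (hy : 0 < y) (hσ : 0 < σ2) {c d : ℝ}
    (hc : c = σ2 * (1 + y)) (hd : d = 2 * σ2 * Real.sqrt y) {z : ℂ} (hz : 0 < z.im) {θ : ℝ}
    (hθ : θ ∈ Set.Icc 0 Real.pi) :
    |d * -Real.sin θ| • (mpDensity y σ2 (c + d * Real.cos θ) •
        (((c + d * Real.cos θ : ℝ) : ℂ) - z)⁻¹)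
      = d ^ 2 / (2 * Real.pi * y * σ2 * z) *
        ((Real.sin θ : ℂ) ^ 2 / (((c + d * Real.cos θ : ℝ) : ℂ) - z)
          - (Real.sin θ : ℂ) ^ 2 / (((c + d * Real.cos θ : ℝ) : ℂ) - 0)) := by
  have hz0 : z ≠ 0 := by rintro rfl; simp at hz
  rw [smul_smul, abs_deriv_mul_mpDensity hy hσ hc hd hθ, real_smul]
  have hxz : ((c + d * Real.cos θ : ℝ) : ℂ) - z ≠ 0 := by
    intro h
    have := congrArg Complex.im h
    rw [sub_im, ofReal_im, zero_im] at this
    linarith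
  have hzero : c + d * Real.cos θ = 0 → Real.sin θ = 0 := by
    intro h
    have hd0 : 0 < d := by rw [hd]; have := Real.sqrt_pos.mpr hy; positivity
    have hcd : 0 ≤ c - d := by
      rw [hc, hd, ← mp_edge_left hy]; positivity
    have h1 : Real.cos θ = -1 := by nlinarith [Real.neg_one_le_cos θ]
    have h2 := Real.sin_sq_add_cos_sq θ
    rw [h1] at h2
    nlinarith
  by_cases hx : c + d * Real.cos θ = 0
  · rw [hzero hx]; simp
  · push_cast [-ofReal_cos, -ofReal_sin]
    rw [ofReal_add, ofReal_mul] at hxz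
    have hx' : (c : ℂ) + d * (Real.cos θ : ℂ) ≠ 0 := by exact_mod_cast hx
    have hyC : (y : ℂ) ≠ 0 := by exact_mod_cast hy.ne'
    have hσC : (σ2 : ℂ) ≠ 0 := by exact_mod_cast hσ.ne'
    have hpi : (Real.pi : ℂ) ≠ 0 := by exact_mod_cast Real.pi_ne_zero
    rw [sub_zero]
    generalize (Real.cos θ : ℂ) = C at *
    field_simp
    ring

lemma mpDensity_smul_eq_indicator {y σ2 : ℝ} (hy : 0 < y) {c d : ℝ}
    (hc : c = σ2 * (1 + y)) (hd : d = 2 * σ2 * Real.sqrt y) (g : ℝ → ℂ) :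
    (fun x ↦ mpDensity y σ2 x • g x)
      = (Set.Icc (c - d) (c + d)).indicator fun x ↦ mpDensity y σ2 x • g x := by
  symm
  rw [Set.indicator_eq_self]
  intro x hx
  by_contra h
  refine hx ?_
  have h' : ¬ (c - d ≤ x ∧ x ≤ c + d) := h
  simp only [mpDensity, mp_edge_left hy, mp_edge_right hy, ← hc, ← hd, if_neg h', zero_smul]

/-- Integrability and value of the resolvent kernel against the Marčenko–Pastur density, in terms
of the Joukowski coordinates `w` and `w₀` of the spectral parameters `z` and `0`. -/
lemma integrable_and_integral_mpDensity_smul {y σ2 : ℝ} (hy : 0 < y) (hσ : 0 < σ2) {c d : ℝ}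
    (hc : c = σ2 * (1 + y)) (hd : d = 2 * σ2 * Real.sqrt y) {z : ℂ} (hz : 0 < z.im)
    {w w₀ : ℂ} (hw0 : w ≠ 0) (hw : ‖w‖ < 1) (hζ : z = c + d / 2 * (w + w⁻¹))
    (hw₀0 : w₀ ≠ 0) (hw₀ : ‖w₀‖ < 1 ∨ w₀ = -1) (hζ₀ : 0 = c + d / 2 * (w₀ + w₀⁻¹)) :
    Integrable (fun x : ℝ ↦ mpDensity y σ2 x • ((x : ℂ) - z)⁻¹) ∧
    ∫ x : ℝ, mpDensity y σ2 x • ((x : ℂ) - z)⁻¹ = (w₀ - w) / (Real.sqrt y * z) := by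
  have hsq : 0 < Real.sqrt y := Real.sqrt_pos.mpr hy
  have hd0 : 0 < d := by rw [hd]; positivity
  have hz0 : z ≠ 0 := by rintro rfl; simp at hz
  have hI := intervalIntegrable_sin_sq_div_affine_cos hd0 hw0 (.inl hw) hζ
  have hI₀ := intervalIntegrable_sin_sq_div_affine_cos hd0 hw₀0 hw₀ hζ₀
  rw [mpDensity_smul_eq_indicator hy hc hd, integrable_indicator_iff measurableSet_Icc,
    integral_indicator measurableSet_Icc, ← image_affine_cos_Icc hd0 c,
    integrableOn_image_iff_integrableOn_abs_deriv_smul measurableSet_Icc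
      (fun θ _ ↦ hasDerivWithinAt_affine_cos c d θ _) (injOn_affine_cos hd0 c),
    integral_image_eq_integral_abs_deriv_smul measurableSet_Icc
      (fun θ _ ↦ hasDerivWithinAt_affine_cos c d θ _) (injOn_affine_cos hd0 c),
    integrableOn_congr_fun (fun θ hθ ↦ abs_deriv_smul_mpDensity_smul hy hσ hc hd hz hθ)
      measurableSet_Icc,
    setIntegral_congr_fun measurableSet_Icc
      (fun θ hθ ↦ abs_deriv_smul_mpDensity_smul hy hσ hc hd hz hθ)]
  constructor
  · rw [← intervalIntegrable_iff_integrableOn_Icc_of_le Real.pi_pos.le]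
    exact (hI.sub hI₀).const_mul _
  · rw [integral_Icc_eq_integral_Ioc, ← intervalIntegral.integral_of_le Real.pi_pos.le,
      intervalIntegral.integral_const_mul, intervalIntegral.integral_sub hI hI₀,
      integral_sin_sq_div_affine_cos hd0 hw0 (.inl hw) hζ,
      integral_sin_sq_div_affine_cos hd0 hw₀0 hw₀ hζ₀]
    have hσC : (σ2 : ℂ) ≠ 0 := by exact_mod_cast hσ.ne'
    have hpi : (Real.pi : ℂ) ≠ 0 := by exact_mod_cast Real.pi_ne_zero
    have hsC : (Real.sqrt y : ℂ) ≠ 0 := by exact_mod_cast hsq.ne'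
    have hyC : (y : ℂ) = (Real.sqrt y : ℂ) ^ 2 := by exact_mod_cast (Real.sq_sqrt hy.le).symm
    rw [hd, hyC]
    push_cast
    field_simp
    ring

lemma integral_mpLaw {y σ2 : ℝ} (hy : 0 < y) (hσ : 0 < σ2) {f : ℝ → ℂ}
    (hf : Integrable fun x ↦ mpDensity y σ2 x • f x) :
    ∫ x, f x ∂(mpLaw y σ2)
      = (∫ x, mpDensity y σ2 x • f x) + if 1 < y then (1 - 1 / y : ℂ) * f 0 else 0 := by
  have hm : Measurable fun x ↦ ENNReal.ofReal (mpDensity y σ2 x) :=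
    (measurable_mpDensity y σ2).ennreal_ofReal
  have hlt : ∀ᵐ x, ENNReal.ofReal (mpDensity y σ2 x) < ⊤ :=
    Filter.Eventually.of_forall fun _ ↦ ENNReal.ofReal_lt_top
  have hac : Integrable f (volume.withDensity fun x ↦ ENNReal.ofReal (mpDensity y σ2 x)) := by
    rw [integrable_withDensity_iff_integrable_smul' hm hlt]
    simpa only [ENNReal.toReal_ofReal (mpDensity_nonneg hy hσ _)] using hf
  have hdirac : Integrable f ((ENNReal.ofReal (1 - 1 / y)) • Measure.dirac (0 : ℝ)) :=
    (integrable_dirac (by simp)).smul_measure ENNReal.ofReal_ne_top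
  have hval : ∫ x, f x ∂(volume.withDensity fun x ↦ ENNReal.ofReal (mpDensity y σ2 x))
      = ∫ x, mpDensity y σ2 x • f x := by
    rw [integral_withDensity_eq_integral_toReal_smul hm hlt]
    simp only [ENNReal.toReal_ofReal (mpDensity_nonneg hy hσ _)]
  rw [mpLaw]
  split_ifs with h
  · have h0 : 0 ≤ 1 - 1 / y := by rw [sub_nonneg, div_le_one hy]; exact h.le
    rw [integral_add_measure hac hdirac, hval, integral_smul_measure, integral_dirac,
      ENNReal.toReal_ofReal h0, real_smul]
    push_cast; rfl
  · rw [add_zero, add_zero, hval]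

/-- For the Joukowski-type parametrisation `z = σ²(1 + √y w)(1 + √y / w)` of the upper half plane,
the candidate transform has positive imaginary part only on the branch `‖w‖ < 1`. -/
lemma norm_lt_one_of_im_pos {r σ2 : ℝ} (hr : 0 < r) (hσ : 0 < σ2) {z w : ℂ} (hz : 0 < z.im)
    (hw : w ≠ 0) (hzw : z = σ2 * (1 + r ^ 2) + σ2 * r * (w + w⁻¹))
    (him : 0 < (-(w / r + 1) / z).im) : ‖w‖ < 1 := by
  have hz0 : z ≠ 0 := by rintro rfl; simp at hz
  have hrC : (r : ℂ) ≠ 0 := by exact_mod_cast hr.ne'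
  have hσC : (σ2 : ℂ) ≠ 0 := by exact_mod_cast hσ.ne'
  have hfac : z * w = σ2 * (1 + r * w) * (w + r) := by rw [hzw]; field_simp; ring
  have hne := mul_ne_zero hz0 hw
  rw [hfac] at hne
  have h1 : 1 + r * w ≠ 0 := fun h ↦ hne (by rw [h]; ring)
  have h2 : w + r ≠ 0 := fun h ↦ hne (by rw [h]; ring)
  have hm : -(w / r + 1) / z = ((-(r * σ2)⁻¹ : ℝ) : ℂ) * (w / (1 + r * w)) := by
    have : z = σ2 * (1 + r * w) * (w + r) / w := by rw [← hfac]; field_simp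
    rw [this]
    push_cast
    field_simp
  have hN : 0 < normSq (1 + r * w) := normSq_pos.mpr h1
  have hq : (w / (1 + r * w)).im = w.im / normSq (1 + r * w) := by
    rw [div_im]
    simp
    field_simp
    ring
  rw [hm, im_ofReal_mul, hq] at him
  have hwim : w.im < 0 := by
    by_contra! h
    have h3 : 0 ≤ (r * σ2)⁻¹ * (w.im / normSq (1 + r * w)) := by positivity
    linarith
  have hW : 0 < normSq w := normSq_pos.mpr hw
  have hzim : z.im = σ2 * r * (w.im - w.im / normSq w) := by
    have hcast : z = ((σ2 * (1 + r ^ 2) : ℝ) : ℂ) + ((σ2 * r : ℝ) : ℂ) * (w + w⁻¹) := by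
      rw [hzw]; push_cast; ring
    rw [hcast, add_im, ofReal_im, im_ofReal_mul, add_im, inv_im]
    ring
  rw [hzim, mul_pos_iff_of_pos_left (by positivity), sub_pos, div_lt_iff₀ hW] at hz
  have hlt : normSq w < 1 := by nlinarith
  rw [normSq_eq_norm_sq] at hlt
  nlinarith [norm_nonneg w]

/-- The Stieltjes transform of the M-P law equals
`(σ²(1-y) - z + √((z - σ² - yσ²)² - 4yσ⁴)) / (2yzσ²)`, the square root branch being
chosen so that the resulting value has positive imaginary part. -/
theorem stieltjes_transform_mpLaw (y σ2 : ℝ) (hy : 0 < y) (hσ : 0 < σ2)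
    (z : ℂ) (hz : 0 < z.im) (s : ℂ)
    (hs : s ^ 2 = (z - σ2 - y * σ2) ^ 2 - 4 * y * σ2 ^ 2)
    (hbranch : 0 < ((σ2 * (1 - y) - z + s) / (2 * y * z * σ2)).im) :
    ∫ x : ℝ, ((x : ℂ) - z)⁻¹ ∂(mpLaw y σ2)
      = (σ2 * (1 - y) - z + s) / (2 * y * z * σ2) := by
  have hr : 0 < Real.sqrt y := Real.sqrt_pos.mpr hy
  have hysq : y = Real.sqrt y ^ 2 := (Real.sq_sqrt hy.le).symm
  set r := Real.sqrt y with hrdef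
  have hyC : (y : ℂ) = (r : ℂ) ^ 2 := by exact_mod_cast hysq
  have hrC : (r : ℂ) ≠ 0 := by exact_mod_cast hr.ne'
  have hσC : (σ2 : ℂ) ≠ 0 := by exact_mod_cast hσ.ne'
  have hz0 : z ≠ 0 := by rintro rfl; simp at hz
  obtain ⟨w, hw⟩ : ∃ w : ℂ, w = (z - σ2 * (1 + y) - s) / (2 * σ2 * r) := ⟨_, rfl⟩
  have hwmul : w * ((z - σ2 * (1 + y) + s) / (2 * σ2 * r)) = 1 := by
    rw [hw]
    field_simp
    linear_combination (-1 : ℂ) * hs + 4 * (σ2 : ℂ) ^ 2 * hyC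
  have hw0 : w ≠ 0 := left_ne_zero_of_mul_eq_one hwmul
  have hzw : z = σ2 * (1 + y) + σ2 * r * (w + w⁻¹) := by
    rw [inv_eq_of_mul_eq_one_right hwmul, hw]
    field_simp
    ring
  have hm : (σ2 * (1 - y) - z + s) / (2 * y * z * σ2) = -(w / r + 1) / z := by
    rw [hw, hyC]
    field_simp
    ring
  rw [hm] at hbranch ⊢
  have hwn : ‖w‖ < 1 := norm_lt_one_of_im_pos hr hσ hz hw0 (by rw [hzw, hyC]) hbranch
  obtain ⟨w₀, hw₀⟩ : ∃ w₀ : ℝ, w₀ = if 1 < y then -r⁻¹ else -r := ⟨_, rfl⟩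
  have hw₀0 : (w₀ : ℂ) ≠ 0 := by
    rw [hw₀]; split_ifs <;> simpa using hr.ne'
  have hw₀n : ‖(w₀ : ℂ)‖ < 1 ∨ (w₀ : ℂ) = -1 := by
    rw [hw₀, norm_real]
    split_ifs with h
    · left
      rw [norm_neg, norm_inv, Real.norm_of_nonneg hr.le]
      exact inv_lt_one_of_one_lt₀ (by rw [hrdef, Real.lt_sqrt zero_le_one]; simpa using h)
    · have hr1 : r ≤ 1 := by rw [hrdef, Real.sqrt_le_one]; linarith
      rw [norm_neg, Real.norm_of_nonneg hr.le]
      rcases hr1.lt_or_eq with h1 | h1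
      · exact .inl h1
      · right; rw [h1]; simp
  have hζ₀ : (0 : ℂ) = (σ2 * (1 + y) : ℝ) + (2 * σ2 * r : ℝ) / 2 * ((w₀ : ℂ) + (w₀ : ℂ)⁻¹) := by
    rw [hw₀]
    push_cast
    rw [hyC]
    split_ifs <;> push_cast <;> field_simp <;> ring
  obtain ⟨hint, hval⟩ := integrable_and_integral_mpDensity_smul hy hσ rfl rfl hz hw0 hwn
    (by rw [hzw]; push_cast; ring) hw₀0 hw₀n hζ₀
  rw [integral_mpLaw hy hσ hint, hval, hw₀, ← hrdef]
  split_ifs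
  · push_cast
    rw [hyC]
    field_simp
    ring
  · push_cast
    field_simp
    ring
end

section
/- Let A and B be p × n complex matrices and let F^S, F^{S̃} be the empirical spectral distributions of S = AA* and S̃ = BB*. Then L⁴(F^S, F^{S̃}) ≤ (2/p²)·tr(AA* + BB*)·tr((A-B)(A-B)*), where L denotes the Lévy distance between distribution functions. -/
open Matrix

/-- Empirical spectral distribution function of a Hermitian matrix. -/
noncomputable def ESD {p : ℕ} {M : Matrix (Fin p) (Fin p) ℂ}
    (hM : M.IsHermitian) (x : ℝ) : ℝ :=
  (Finset.univ.filter fun j => hM.eigenvalues j ≤ x).card / p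

/-- Lévy distance between two distribution functions. -/
noncomputable def levyDist (F G : ℝ → ℝ) : ℝ :=
  sInf {ε : ℝ | 0 < ε ∧ ∀ x : ℝ, F (x - ε) - ε ≤ G x ∧ G x ≤ F (x + ε) + ε}

/-- A level at which the Lévy condition holds bounds the Lévy distance from above. -/
lemma levyDist_le_of_forall {F G : ℝ → ℝ} {ε : ℝ} (hε : 0 < ε)
    (h : ∀ x, F (x - ε) - ε ≤ G x ∧ G x ≤ F (x + ε) + ε) : levyDist F G ≤ ε :=
  csInf_le ⟨0, fun _ hδ => hδ.1.le⟩ ⟨hε, h⟩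

lemma levyDist_nonneg (F G : ℝ → ℝ) : 0 ≤ levyDist F G :=
  Real.sInf_nonneg fun _ hδ => hδ.1.le

/-- The squared Frobenius norm as the sum of the squared norms of the columns. -/
lemma trace_mul_conjTranspose_self_re {m n : Type*} [Fintype m] [Fintype n]
    (A : Matrix m n ℂ) :
    (A * Aᴴ).trace.re = ∑ j, ‖WithLp.toLp 2 fun i => A i j‖ ^ 2 := by
  simp only [EuclideanSpace.norm_sq_eq, trace, diag_apply, mul_apply, conjTranspose_apply,
    Complex.re_sum]
  rw [Finset.sum_comm]
  refine Finset.sum_congr rfl fun j _ => Finset.sum_congr rfl fun i _ => ?_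
  rw [← Complex.normSq_eq_norm_sq, RCLike.star_def, Complex.mul_conj, Complex.ofReal_re]

/-- Bessel's inequality for the Frobenius norm. -/
lemma sum_norm_sq_toEuclideanLin_conjTranspose_le {m n ι : Type*} [Fintype m] [Fintype n]
    [DecidableEq m] [Fintype ι] (A : Matrix m n ℂ) {v : ι → EuclideanSpace ℂ m}
    (hv : Orthonormal ℂ v) :
    ∑ i, ‖toEuclideanLin Aᴴ (v i)‖ ^ 2 ≤ (A * Aᴴ).trace.re := by
  rw [trace_mul_conjTranspose_self_re]
  simp only [EuclideanSpace.norm_sq_eq (toEuclideanLin Aᴴ _)]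
  rw [Finset.sum_comm]
  refine Finset.sum_le_sum fun j _ => ?_
  refine le_trans (le_of_eq ?_) (hv.sum_inner_products_le (s := Finset.univ) _)
  refine Finset.sum_congr rfl fun i _ => ?_
  rw [norm_inner_symm]
  congr 2
  simp [EuclideanSpace.inner_eq_star_dotProduct, mulVec, dotProduct, mul_comm]

/-- The quadratic form of `A * Aᴴ` diagonalized in an eigenbasis. -/
lemma norm_sq_toEuclideanLin_conjTranspose {m n : Type*} [Fintype m] [Fintype n]
    [DecidableEq m] [DecidableEq n] (A : Matrix m n ℂ) (v : EuclideanSpace ℂ m) :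
    ‖toEuclideanLin Aᴴ v‖ ^ 2 = ∑ j, (isHermitian_mul_conjTranspose_self A).eigenvalues j *
      ‖inner ℂ ((isHermitian_mul_conjTranspose_self A).eigenvectorBasis j) v‖ ^ 2 := by
  set hA := isHermitian_mul_conjTranspose_self A
  set b := hA.eigenvectorBasis
  have heig (j : m) : toEuclideanLin (A * Aᴴ) (b j) = (hA.eigenvalues j : ℂ) • b j := by
    ext i
    simpa using congrFun (hA.mulVec_eigenvectorBasis j) i
  have hinner : inner ℂ v (toEuclideanLin (A * Aᴴ) v) =
      inner ℂ (toEuclideanLin Aᴴ v) (toEuclideanLin Aᴴ v) := by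
    rw [toEuclideanLin_conjTranspose_eq_adjoint, LinearMap.adjoint_inner_left,
      ← toEuclideanLin_conjTranspose_eq_adjoint]
    congr 1
    ext i
    simp
  rw [← inner_self_eq_norm_sq (𝕜 := ℂ), ← hinner, ← b.sum_inner_mul_inner, map_sum]
  refine Finset.sum_congr rfl fun j _ => ?_
  rw [← (isSymmetric_toEuclideanLin_iff.mpr hA) (b j) v, heig, inner_smul_left,
    ← inner_conj_symm v (b j)]
  generalize inner ℂ (b j) v = z
  rw [← Complex.normSq_eq_norm_sq, Complex.normSq_apply]
  simp
  ring

/-- A vector in the span of part of an orthonormal basis is orthogonal to the rest of it. -/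
lemma OrthonormalBasis.inner_eq_zero_of_mem_span {ι 𝕜 E : Type*} [RCLike 𝕜] [Fintype ι]
    [NormedAddCommGroup E] [InnerProductSpace 𝕜 E] (b : OrthonormalBasis ι 𝕜 E) {P : ι → Prop}
    {v : E} (hv : v ∈ Submodule.span 𝕜 (Set.range fun j : {j // P j} => b j))
    {i : ι} (hi : ¬ P i) : inner 𝕜 (b i) v = 0 := by
  induction hv using Submodule.span_induction with
  | mem x hx =>
    obtain ⟨⟨j, hj⟩, rfl⟩ := hx
    exact b.orthonormal.2 fun h => hi (h ▸ hj)
  | zero => exact inner_zero_right _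
  | add x y _ _ hx hy => rw [inner_add_right, hx, hy, add_zero]
  | smul c x _ hx => rw [inner_smul_right, hx, mul_zero]

lemma OrthonormalBasis.finrank_span_subtype {ι 𝕜 E : Type*} [RCLike 𝕜] [Fintype ι]
    [NormedAddCommGroup E] [InnerProductSpace 𝕜 E] (b : OrthonormalBasis ι 𝕜 E) (P : ι → Prop)
    [DecidablePred P] :
    Module.finrank 𝕜 (Submodule.span 𝕜 (Set.range fun j : {j // P j} => b j)) =
      (Finset.univ.filter P).card := by
  rw [← Fintype.card_subtype]
  exact finrank_span_eq_card (b.orthonormal.linearIndependent.comp _ Subtype.val_injective)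

/-- If the form of `B * Bᴴ` exceeds that of `A * Aᴴ` by `ε` on an orthonormal family, then the
family is small in terms of the Frobenius norms. -/
lemma sq_card_mul_le_of_orthonormal {m n ι : Type*} [Fintype m] [Fintype n]
    [DecidableEq m] [DecidableEq n] [Fintype ι] (A B : Matrix m n ℂ)
    {v : ι → EuclideanSpace ℂ m} (hv : Orthonormal ℂ v) {ε : ℝ} (hε : 0 ≤ ε)
    (h : ∀ i, ε ≤ ‖toEuclideanLin Bᴴ (v i)‖ ^ 2 - ‖toEuclideanLin Aᴴ (v i)‖ ^ 2) :
    (Fintype.card ι * ε) ^ 2 ≤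
      2 * (A * Aᴴ + B * Bᴴ).trace.re * ((A - B) * (A - B)ᴴ).trace.re := by
  set a := fun i => ‖toEuclideanLin Aᴴ (v i)‖
  set b := fun i => ‖toEuclideanLin Bᴴ (v i)‖
  set d := fun i => ‖toEuclideanLin (A - B)ᴴ (v i)‖
  have hd (i : ι) : b i - a i ≤ d i := by
    have : toEuclideanLin (A - B)ᴴ (v i) = toEuclideanLin Aᴴ (v i) - toEuclideanLin Bᴴ (v i) := by
      rw [conjTranspose_sub, map_sub, LinearMap.sub_apply]
    simp only [d, this]
    exact (norm_sub_norm_le _ _).trans_eq (norm_sub_rev _ _)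
  have hsum : Fintype.card ι * ε ≤ ∑ i, d i * (a i + b i) := by
    calc Fintype.card ι * ε = ∑ _i : ι, ε := by simp
      _ ≤ _ := Finset.sum_le_sum fun i _ => (h i).trans <| by
        calc b i ^ 2 - a i ^ 2 = (b i - a i) * (a i + b i) := by ring
          _ ≤ _ := mul_le_mul_of_nonneg_right (hd i) (by positivity)
  have hab : ∑ i, (a i + b i) ^ 2 ≤ 2 * (A * Aᴴ + B * Bᴴ).trace.re := by
    calc ∑ i, (a i + b i) ^ 2 ≤ ∑ i, 2 * (a i ^ 2 + b i ^ 2) :=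
          Finset.sum_le_sum fun i _ => add_sq_le
      _ = 2 * (∑ i, a i ^ 2 + ∑ i, b i ^ 2) := by
          rw [← Finset.mul_sum, Finset.sum_add_distrib]
      _ ≤ _ := by
        rw [trace_add, Complex.add_re]
        gcongr <;> exact sum_norm_sq_toEuclideanLin_conjTranspose_le _ hv
  calc (Fintype.card ι * ε) ^ 2 ≤ (∑ i, d i * (a i + b i)) ^ 2 := by gcongr
    _ ≤ (∑ i, d i ^ 2) * ∑ i, (a i + b i) ^ 2 := Finset.sum_mul_sq_le_sq_mul_sq _ _ _
    _ ≤ ((A - B) * (A - B)ᴴ).trace.re * (2 * (A * Aᴴ + B * Bᴴ).trace.re) := by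
      have hD := sum_norm_sq_toEuclideanLin_conjTranspose_le (A - B) hv
      exact mul_le_mul hD hab (by positivity) (le_trans (by positivity) hD)
    _ = _ := mul_comm _ _

/-- One-sided Lévy comparison of the spectral distributions of `A * Aᴴ` and `B * Bᴴ`. -/
lemma ESD_sub_le {p n : ℕ} (hp : 0 < p) (A B : Matrix (Fin p) (Fin n) ℂ) {ε : ℝ} (hε : 0 < ε)
    (h : (2 / (p : ℝ) ^ 2) * (A * Aᴴ + B * Bᴴ).trace.re * ((A - B) * (A - B)ᴴ).trace.re ≤ ε ^ 4)
    (x : ℝ) :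
    ESD (isHermitian_mul_conjTranspose_self A) (x - ε) - ε ≤
      ESD (isHermitian_mul_conjTranspose_self B) x := by
  set hA := isHermitian_mul_conjTranspose_self A
  set hB := isHermitian_mul_conjTranspose_self B
  set E := Submodule.span ℂ
    (Set.range fun j : {j // hA.eigenvalues j ≤ x - ε} => hA.eigenvectorBasis j)
  set F := Submodule.span ℂ
    (Set.range fun j : {j // ¬ hB.eigenvalues j ≤ x} => hB.eigenvectorBasis j)
  set k := Module.finrank ℂ (E ⊓ F : Submodule ℂ (EuclideanSpace ℂ (Fin p))) with hk
  have hdim : (Finset.univ.filter fun j => hA.eigenvalues j ≤ x - ε).card ≤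
      (Finset.univ.filter fun j => hB.eigenvalues j ≤ x).card + k := by
    have h₁ := Submodule.finrank_sup_add_finrank_inf_eq E F
    have h₂ := (E ⊔ F).finrank_le
    rw [finrank_euclideanSpace, Fintype.card_fin] at h₂
    have h₃ := Finset.card_filter_add_card_filter_not (s := Finset.univ)
      (fun j => hB.eigenvalues j ≤ x)
    rw [Finset.card_univ, Fintype.card_fin] at h₃
    have hE : Module.finrank ℂ E = _ := hA.eigenvectorBasis.finrank_span_subtype _
    have hF : Module.finrank ℂ F = _ := hB.eigenvectorBasis.finrank_span_subtype _
    omega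
  have hnorm : ∀ v ∈ E ⊓ F, ‖v‖ = 1 →
      ε ≤ ‖toEuclideanLin Bᴴ v‖ ^ 2 - ‖toEuclideanLin Aᴴ v‖ ^ 2 := by
    rintro v ⟨hvE, hvF⟩ hv
    have hAv : ‖toEuclideanLin Aᴴ v‖ ^ 2 ≤ (x - ε) * ‖v‖ ^ 2 := by
      rw [norm_sq_toEuclideanLin_conjTranspose, ← hA.eigenvectorBasis.sum_sq_norm_inner_right,
        Finset.mul_sum]
      refine Finset.sum_le_sum fun j _ => ?_
      by_cases hj : hA.eigenvalues j ≤ x - ε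
      · gcongr
      · simp [hA.eigenvectorBasis.inner_eq_zero_of_mem_span hvE hj]
    have hBv : x * ‖v‖ ^ 2 ≤ ‖toEuclideanLin Bᴴ v‖ ^ 2 := by
      rw [norm_sq_toEuclideanLin_conjTranspose, ← hB.eigenvectorBasis.sum_sq_norm_inner_right,
        Finset.mul_sum]
      refine Finset.sum_le_sum fun j _ => ?_
      by_cases hj : hB.eigenvalues j ≤ x
      · simp [hB.eigenvectorBasis.inner_eq_zero_of_mem_span hvF (not_not.mpr hj)]
      · have := (not_le.mp hj).le
        gcongr
    rw [hv] at hAv hBv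
    linarith
  have hp' : (0 : ℝ) < p := Nat.cast_pos.mpr hp
  have hkε : (k : ℝ) ≤ p * ε := by
    let w := stdOrthonormalBasis ℂ (E ⊓ F : Submodule ℂ (EuclideanSpace ℂ (Fin p)))
    have hw : Orthonormal ℂ fun i => (w i : EuclideanSpace ℂ (Fin p)) :=
      w.orthonormal.comp_linearIsometry (E ⊓ F).subtypeₗᵢ
    have := sq_card_mul_le_of_orthonormal A B hw hε.le
      fun i => hnorm _ (w i).2 (hw.1 i)
    rw [Fintype.card_fin, ← hk] at this
    have hsq : (k * ε) ^ 2 ≤ (p * ε * ε) ^ 2 := by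
      calc (k * ε) ^ 2 ≤ _ := this
        _ = p ^ 2 * ((2 / (p : ℝ) ^ 2) * (A * Aᴴ + B * Bᴴ).trace.re *
            ((A - B) * (A - B)ᴴ).trace.re) := by field_simp
        _ ≤ p ^ 2 * ε ^ 4 := by gcongr
        _ = _ := by ring
    exact le_of_mul_le_mul_right (le_of_sq_le_sq hsq (by positivity)) hε
  have hdim' : ((Finset.univ.filter fun j => hA.eigenvalues j ≤ x - ε).card : ℝ) ≤
      (Finset.univ.filter fun j => hB.eigenvalues j ≤ x).card + k := by exact_mod_cast hdim
  rw [ESD, ESD, sub_le_iff_le_add, div_add' _ _ _ hp'.ne']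
  gcongr
  linarith

/-- `L⁴(F^{AA*}, F^{BB*}) ≤ (2/p²)·tr(AA* + BB*)·tr((A-B)(A-B)*)`. -/
theorem levy_distance_fourth_power_bound {p n : ℕ} (hp : 0 < p)
    (A B : Matrix (Fin p) (Fin n) ℂ) :
    levyDist (ESD (isHermitian_mul_conjTranspose_self A))
        (ESD (isHermitian_mul_conjTranspose_self B)) ^ 4 ≤
      (2 / (p : ℝ) ^ 2) * (A * Aᴴ + B * Bᴴ).trace.re *
        ((A - B) * (A - B)ᴴ).trace.re := by
  set R := (2 / (p : ℝ) ^ 2) * (A * Aᴴ + B * Bᴴ).trace.re * ((A - B) * (A - B)ᴴ).trace.re with hR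
  have hRswap : (2 / (p : ℝ) ^ 2) * (B * Bᴴ + A * Aᴴ).trace.re *
      ((B - A) * (B - A)ᴴ).trace.re = R := by
    rw [hR, add_comm (B * Bᴴ), ← neg_sub A B, conjTranspose_neg, Matrix.neg_mul,
      Matrix.mul_neg, neg_neg]
  set L := levyDist (ESD (isHermitian_mul_conjTranspose_self A))
    (ESD (isHermitian_mul_conjTranspose_self B))
  by_contra! hlt
  obtain ⟨ε, hεL, hε⟩ : ∃ ε < L, 0 < ε ∧ R ≤ ε ^ 4 := by
    have hL : 0 < L := by
      refine (levyDist_nonneg _ _).lt_of_ne' fun h0 => ?_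
      have hR0 : 0 ≤ R := by
        rw [hR, trace_add, Complex.add_re]
        simp only [trace_mul_conjTranspose_self_re]
        positivity
      simp only [L, h0] at hlt
      linarith
    have hcont : ∀ᶠ ε in nhdsWithin L (Set.Iio L), R < ε ^ 4 :=
      ((continuous_pow 4).tendsto L).mono_left nhdsWithin_le_nhds |>.eventually_const_lt hlt
    have hpos : ∀ᶠ ε in nhdsWithin L (Set.Iio L), 0 < ε :=
      (eventually_gt_nhds hL).filter_mono nhdsWithin_le_nhds
    obtain ⟨ε, h₁, h₂, h₃⟩ := (hcont.and (hpos.and self_mem_nhdsWithin)).exists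
    exact ⟨ε, h₃, h₂, h₁.le⟩
  refine hεL.not_ge (levyDist_le_of_forall hε.1 fun x => ⟨ESD_sub_le hp A B hε.1 hε.2 x, ?_⟩)
  have := ESD_sub_le hp B A hε.1 (hRswap.trans_le hε.2) (x + ε)
  rw [add_sub_cancel_right] at this
  linarith
end

section
/- Let {X_k}_{k=1}^n be a complex-valued martingale difference sequence with respect to an increasing filtration. Then for every p > 1 there is a constant K_p depending only on p such that E|Σ_{k=1}^n X_k|^p ≤ K_p · E(Σ_{k=1}^n |X_k|²)^{p/2}. -/
open MeasureTheory

lemma one_add_rpow_le_quadratic {q z : ℝ} (hq : 0 ≤ q) (hz : -1 ≤ z) (hz4 : z ≤ 4) :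
    (1 + z) ^ q ≤ 1 + q * z + q ^ 2 * 5 ^ q * z ^ 2 := by
  rcases le_total q 1 with hq1 | hq1
  · have := rpow_one_add_le_one_add_mul_self hz hq hq1
    have : 0 ≤ q ^ 2 * 5 ^ q * z ^ 2 := by positivity
    linarith
  rcases eq_or_lt_of_le hz with rfl | hz
  · have : (1 : ℝ) ≤ 5 ^ q := Real.one_le_rpow (by norm_num) hq
    have h0 : (1 + (-1 : ℝ)) ^ q = 0 := by
      rw [add_neg_cancel, Real.zero_rpow (by linarith)]
    rw [h0]
    nlinarith
  have hy : 0 < 1 + z := by linarith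
  have hsplit : (1 + z) ^ q = (1 + z) * (1 + z) ^ (q - 1) := by
    rw [← Real.rpow_one_add' hy.le (by linarith)]; congr 1; ring
  have h5 : (1 : ℝ) ≤ 5 ^ q := Real.one_le_rpow (by norm_num) hq
  -- the tangent line at `1 + z` lies below the graph
  have htan : (1 + z) ^ q ≤ 1 + q * (1 + z) ^ (q - 1) * z := by
    have h1 : -1 ≤ -z / (1 + z) := by rw [le_div_iff₀ hy]; linarith
    have h2 := one_add_mul_self_le_rpow_one_add h1 hq1
    have h3 : 1 + -z / (1 + z) = (1 + z)⁻¹ := by field_simp; ring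
    rw [h3, Real.inv_rpow hy.le] at h2
    have h4 : 0 < (1 + z) ^ q := by positivity
    have h6 := mul_le_mul_of_nonneg_left h2 h4.le
    rw [mul_inv_cancel₀ h4.ne'] at h6
    have h7 : (1 + z) ^ q * (1 + q * (-z / (1 + z))) =
        (1 + z) ^ q - q * (1 + z) ^ (q - 1) * z := by
      rw [hsplit]; field_simp; ring
    linarith
  have hdiff : ((1 + z) ^ (q - 1) - 1) * z ≤ q * 5 ^ q * z ^ 2 := by
    rcases le_total 0 z with h0 | h0
    · have h8 : (1 + z) ^ (q - 1) ≤ 5 ^ q :=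
        (Real.rpow_le_rpow_of_exponent_le (by linarith) (by linarith)).trans
          (Real.rpow_le_rpow hy.le (by linarith) hq)
      have h9 : (1 + z) ^ (q - 1) ≤ (1 + z) ^ q :=
        Real.rpow_le_rpow_of_exponent_le (by linarith) (by linarith)
      have h10 : (1 + z) ^ (q - 1) - 1 ≤ q * 5 ^ q * z := by
        have := mul_le_mul_of_nonneg_left h8 (mul_nonneg hq h0)
        nlinarith
      nlinarith
    · have h1 : (1 + z) ^ q ≤ (1 + z) ^ (q - 1) :=
        Real.rpow_le_rpow_of_exponent_ge hy (by linarith) (by linarith)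
      have h2 := one_add_mul_self_le_rpow_one_add hz.le hq1
      have h3 : 0 ≤ z ^ 2 * q * (5 ^ q - 1) := by
        have : 0 ≤ (5 : ℝ) ^ q - 1 := by linarith
        positivity
      nlinarith
  nlinarith

lemma one_add_rpow_ge_quadratic {s z : ℝ} (hs : 0 ≤ s) (hs1 : s ≤ 1) (hz : -1 ≤ z) :
    1 + s * z - z ^ 2 ≤ (1 + z) ^ s := by
  rcases eq_or_lt_of_le hz with rfl | hz
  · have : (0 : ℝ) ≤ (1 + -1) ^ s := by positivity
    nlinarith
  have hy : 0 < 1 + z := by linarith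
  have h1 := rpow_one_add_le_one_add_mul_self hz.le (p := 1 - s) (by linarith) (by linarith)
  have h2 : (1 + z) ^ s * (1 + z) ^ (1 - s) = 1 + z := by
    rw [← Real.rpow_add hy]; simp
  have h3 : 0 < (1 + z) ^ s := by positivity
  have h4 : 0 < (1 + z) ^ (1 - s) := by positivity
  set m := 1 + (1 - s) * z
  have hm : 0 < m := h4.trans_le h1
  have h5 : 1 + z ≤ (1 + z) ^ s * m := by
    have := mul_le_mul_of_nonneg_left h1 h3.le
    rwa [h2] at this
  have h6 : m * (1 + s * z - (1 - s) * z ^ 2) ≤ 1 + z := by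
    have : m * (1 + s * z - (1 - s) * z ^ 2) = 1 + z - (1 - s) ^ 2 * z ^ 2 * (1 + z) := by
      simp only [m]; ring
    have : 0 ≤ (1 - s) ^ 2 * z ^ 2 * (1 + z) := by positivity
    linarith
  have h7 : 1 + s * z - (1 - s) * z ^ 2 ≤ (1 + z) ^ s := by
    by_contra! h
    nlinarith
  nlinarith [mul_nonneg hs (sq_nonneg z)]

lemma rpow_sub_one_mul_abs_le {q r e b : ℝ} (hq : 1 / 2 ≤ q) (hr : 0 ≤ r) (he : 0 ≤ e)
    (hb : b ^ 2 ≤ r * e) : r ^ (q - 1) * |b| ≤ (r + e) ^ q := by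
  rcases eq_or_lt_of_le hr with rfl | hr
  · have : b = 0 := by nlinarith
    subst this
    simp; positivity
  have h1 : |b| ≤ r ^ (1 / 2 : ℝ) * e ^ (1 / 2 : ℝ) := by
    rw [← Real.mul_rpow hr.le he, ← Real.sqrt_eq_rpow]
    exact Real.abs_le_sqrt hb
  calc r ^ (q - 1) * |b| ≤ r ^ (q - 1) * (r ^ (1 / 2 : ℝ) * e ^ (1 / 2 : ℝ)) := by gcongr
    _ = r ^ (q - 1 / 2) * e ^ (1 / 2 : ℝ) := by
      rw [← mul_assoc, ← Real.rpow_add hr]; congr 2; ring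
    _ ≤ (r + e) ^ (q - 1 / 2) * (r + e) ^ (1 / 2 : ℝ) := by
      gcongr
      · linarith
      · linarith
    _ = (r + e) ^ q := by rw [← Real.rpow_add (by linarith)]; congr 1; ring

lemma mul_rpow_sub_one {x q : ℝ} (hx : 0 ≤ x) (hq : 0 < q) : x * x ^ (q - 1) = x ^ q := by
  rw [← Real.rpow_one_add' hx (by linarith)]; congr 1; ring

lemma rpow_increment_le {q r e b : ℝ} (hq : 1 / 2 ≤ q) (hr : 0 ≤ r) (he : 0 ≤ e)
    (hb : b ^ 2 ≤ r * e) :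
    (r + 2 * b + 2 * e) ^ q ≤ r ^ q + 2 * q * r ^ (q - 1) * b +
      (2 * (3 ^ q + 2 * q) + 2 * (2 * q + 16 * (q ^ 2 * 5 ^ q))) * ((r + e) ^ (q - 1) * e) := by
  have hq0 : 0 < q := by linarith
  have hw : 0 ≤ (r + e) ^ (q - 1) * e := by positivity
  have hpow := mul_rpow_sub_one (add_nonneg hr he) hq0
  have h3 : (0 : ℝ) < 3 ^ q := by positivity
  have h5 : (0 : ℝ) < 5 ^ q := by positivity
  have habs : 2 * |b| ≤ r + e := by
    have : |b| ≤ (r + e) / 2 := abs_le_of_sq_le_sq (by nlinarith [sq_nonneg (r - e)]) (by linarith)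
    linarith
  have hb1 := neg_abs_le b
  have hb2 := le_abs_self b
  rcases le_or_gt r e with hre | hre
  · have h1 : (r + 2 * b + 2 * e) ^ q ≤ 3 ^ q * (r + e) ^ q := by
      rw [← Real.mul_rpow (by norm_num) (by linarith)]
      apply Real.rpow_le_rpow <;> linarith
    have h2 := rpow_sub_one_mul_abs_le hq hr he hb
    have h2' : -(2 * q * r ^ (q - 1) * b) ≤ 2 * q * (r + e) ^ q := by
      have : 0 ≤ r ^ (q - 1) := by positivity
      nlinarith [mul_le_mul_of_nonneg_left hb1 this, mul_le_mul_of_nonneg_left h2 hq0.le]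
    have h4 : (r + e) ^ q ≤ 2 * ((r + e) ^ (q - 1) * e) := by
      rw [← hpow]
      have : 0 ≤ (r + e) ^ (q - 1) := by positivity
      nlinarith
    have h6 : (3 ^ q + 2 * q) * (r + e) ^ q ≤ (3 ^ q + 2 * q) * (2 * ((r + e) ^ (q - 1) * e)) := by
      gcongr
    have h7 : 0 ≤ (2 * (2 * q + 16 * (q ^ 2 * 5 ^ q))) * ((r + e) ^ (q - 1) * e) := by positivity
    have h8 : 0 ≤ r ^ q := by positivity
    linarith
  · have hr0 : 0 < r := by linarith
    obtain ⟨z, hz⟩ : ∃ z, z = (2 * b + 2 * e) / r := ⟨_, rfl⟩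
    have hzr : r * z = 2 * b + 2 * e := by rw [hz]; field_simp
    have hz1 : -1 ≤ z := by rw [hz, le_div_iff₀ hr0]; linarith
    have hz4 : z ≤ 4 := by rw [hz, div_le_iff₀ hr0]; linarith
    have hz2 : r * z ^ 2 ≤ 16 * e := by
      have h : r * (r * z ^ 2) ≤ r * (16 * e) := by
        have : r * (r * z ^ 2) = (2 * b + 2 * e) ^ 2 := by rw [← hzr]; ring
        rw [this]
        nlinarith [sq_nonneg (b - e)]
      exact le_of_mul_le_mul_left h hr0
    have h1 := one_add_rpow_le_quadratic hq0.le hz1 hz4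
    have h2 : (r + 2 * b + 2 * e) ^ q = r ^ q * (1 + z) ^ q := by
      rw [← Real.mul_rpow hr (by linarith)]; congr 1; linarith
    have h4 : r ^ q = r ^ (q - 1) * r := by rw [mul_comm, mul_rpow_sub_one hr hq0]
    have hs : 0 ≤ r ^ (q - 1) := by positivity
    have h6 : r ^ q * (1 + z) ^ q ≤ r ^ q + 2 * q * r ^ (q - 1) * b +
        (2 * q + 16 * (q ^ 2 * 5 ^ q)) * (r ^ (q - 1) * e) := by
      calc r ^ q * (1 + z) ^ q ≤ r ^ q * (1 + q * z + q ^ 2 * 5 ^ q * z ^ 2) := by gcongr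
        _ = r ^ q + q * r ^ (q - 1) * (r * z) + q ^ 2 * 5 ^ q * r ^ (q - 1) * (r * z ^ 2) := by
          rw [h4]; ring
        _ ≤ r ^ q + q * r ^ (q - 1) * (2 * b + 2 * e) +
            q ^ 2 * 5 ^ q * r ^ (q - 1) * (16 * e) := by
          rw [hzr]; gcongr
        _ = _ := by ring
    have h7 : r ^ (q - 1) ≤ 2 * (r + e) ^ (q - 1) := by
      have : r ^ q ≤ (r + e) ^ q := Real.rpow_le_rpow hr (by linarith) hq0.le
      rw [h4, ← hpow] at this
      have h0 : 0 ≤ (r + e) ^ (q - 1) := by positivity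
      by_contra! h
      nlinarith
    have h8 : (2 * q + 16 * (q ^ 2 * 5 ^ q)) * (r ^ (q - 1) * e) ≤
        (2 * q + 16 * (q ^ 2 * 5 ^ q)) * (2 * (r + e) ^ (q - 1) * e) := by gcongr
    have h9 : 0 ≤ (2 * (3 ^ q + 2 * q)) * ((r + e) ^ (q - 1) * e) := by positivity
    rw [h2]
    linarith

lemma mul_rpow_increment_ge {s r t e b : ℝ} (hs : 0 ≤ s) (ht : 0 ≤ t) (htr : t ≤ r)
    (he : 0 ≤ e) (hb : b ^ 2 ≤ r * e) :
    t * (r ^ s + 2 * s * r ^ (s - 1) * b) ≤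
      t * (r + 2 * b + 2 * e) ^ s + (17 + 2 * s) * ((t + e) ^ s * e) := by
  have hr : 0 ≤ r := ht.trans htr
  have hw : 0 ≤ (t + e) ^ s * e := by positivity
  have habs : 2 * |b| ≤ r + e := by
    have : |b| ≤ (r + e) / 2 := abs_le_of_sq_le_sq (by nlinarith [sq_nonneg (r - e)]) (by linarith)
    linarith
  have hb1 := neg_abs_le b
  have hb2 := le_abs_self b
  rcases eq_or_lt_of_le hs with rfl | hs0
  · simp only [Real.rpow_zero] at *
    linarith
  rcases le_or_gt r e with hre | hre
  · have hbe : b ≤ e := abs_le_of_sq_le_sq' (by nlinarith) he |>.2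
    have h1 : e ^ s ≤ (t + e) ^ s := Real.rpow_le_rpow he (by linarith) hs
    have h2 : r ^ s ≤ e ^ s := Real.rpow_le_rpow hr hre hs
    have h3 : t * r ^ s ≤ (t + e) ^ s * e := by
      rw [mul_comm]
      exact mul_le_mul (h2.trans h1) (htr.trans hre) ht (by positivity)
    have h4 : t * r ^ (s - 1) ≤ (t + e) ^ s := by
      calc t * r ^ (s - 1) ≤ r * r ^ (s - 1) := by gcongr
        _ = r ^ s := mul_rpow_sub_one hr hs0
        _ ≤ _ := h2.trans h1
    have h5 : t * r ^ (s - 1) * b ≤ (t + e) ^ s * e :=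
      (mul_le_mul_of_nonneg_left hbe (by positivity)).trans (mul_le_mul_of_nonneg_right h4 he)
    have h6 : 0 ≤ t * (r + 2 * b + 2 * e) ^ s := by
      have : 0 ≤ r + 2 * b + 2 * e := by linarith
      positivity
    nlinarith [mul_le_mul_of_nonneg_left h5 hs]
  · have hr0 : 0 < r := by linarith
    obtain ⟨z, hz⟩ : ∃ z, z = (2 * b + 2 * e) / r := ⟨_, rfl⟩
    have hzr : r * z = 2 * b + 2 * e := by rw [hz]; field_simp
    have hz1 : -1 ≤ z := by rw [hz, le_div_iff₀ hr0]; linarith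
    have hz2 : r * z ^ 2 ≤ 16 * e := by
      have h : r * (r * z ^ 2) ≤ r * (16 * e) := by
        have : r * (r * z ^ 2) = (2 * b + 2 * e) ^ 2 := by rw [← hzr]; ring
        rw [this]
        nlinarith [sq_nonneg (b - e)]
      exact le_of_mul_le_mul_left h hr0
    have h2 : (r + 2 * b + 2 * e) ^ s = r ^ s * (1 + z) ^ s := by
      rw [← Real.mul_rpow hr (by linarith)]; congr 1; linarith
    have h4 : r ^ s = r ^ (s - 1) * r := by rw [mul_comm, mul_rpow_sub_one hr hs0]
    have h4' : 0 ≤ r ^ (s - 1) := by positivity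
    have hlin : r ^ s * (1 + s * z) = r ^ s + 2 * s * r ^ (s - 1) * b + 2 * s * r ^ (s - 1) * e := by
      have : r ^ s * (1 + s * z) = r ^ s + s * r ^ (s - 1) * (r * z) := by rw [h4]; ring
      rw [this, hzr]; ring
    have hse : 0 ≤ 2 * s * r ^ (s - 1) * e := by positivity
    rw [h2]
    rcases le_total 1 s with hs1 | hs1
    · have h5 := mul_le_mul_of_nonneg_left (one_add_mul_self_le_rpow_one_add hz1 hs1)
        (Real.rpow_nonneg hr s)
      have h6 : r ^ s + 2 * s * r ^ (s - 1) * b ≤ r ^ s * (1 + z) ^ s := by linarith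
      have := mul_le_mul_of_nonneg_left h6 ht
      have : 0 ≤ (17 + 2 * s) * ((t + e) ^ s * e) := by positivity
      linarith
    · have h5 := mul_le_mul_of_nonneg_left (one_add_rpow_ge_quadratic hs hs1 hz1)
        (Real.rpow_nonneg hr s)
      have h6 : r ^ s * z ^ 2 ≤ r ^ (s - 1) * (16 * e) := by
        rw [h4, mul_assoc]; gcongr
      have h7 : r ^ s + 2 * s * r ^ (s - 1) * b - r ^ (s - 1) * (16 * e) ≤
          r ^ s * (1 + z) ^ s := by linarith
      have h8 := mul_le_mul_of_nonneg_left h7 ht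
      have h9 : t * r ^ (s - 1) ≤ (t + e) ^ s := by
        rcases eq_or_lt_of_le ht with rfl | ht0
        · simp; positivity
        calc t * r ^ (s - 1) ≤ t * t ^ (s - 1) := by
              gcongr ?_ * ?_
              exact Real.rpow_le_rpow_of_nonpos ht0 htr (by linarith)
          _ = t ^ s := mul_rpow_sub_one ht hs0
          _ ≤ _ := Real.rpow_le_rpow ht (by linarith) hs
      have h10 := mul_le_mul_of_nonneg_right h9 he
      have h11 : 0 ≤ s * ((t + e) ^ s * e) := by positivity
      linarith

lemma rpow_add_increment_ge {q t e : ℝ} (hq : 0 < q) (ht : 0 ≤ t) (he : 0 ≤ e) :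
    t ^ q + min q 1 * ((t + e) ^ (q - 1) * e) ≤ (t + e) ^ q := by
  rcases eq_or_lt_of_le (add_nonneg ht he) with h0 | h0
  · have : t = 0 := by linarith
    have : e = 0 := by linarith
    subst_vars
    simp
  rw [← mul_rpow_sub_one h0.le hq]
  have hs : 0 ≤ (t + e) ^ (q - 1) := by positivity
  rcases le_total 1 q with h1 | h1
  · rw [min_eq_right h1, ← mul_rpow_sub_one ht hq]
    have : t ^ (q - 1) ≤ (t + e) ^ (q - 1) := Real.rpow_le_rpow ht (by linarith) (by linarith)
    nlinarith [mul_le_mul_of_nonneg_left this ht]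
  · rw [min_eq_left h1]
    have hz : -1 ≤ -e / (t + e) := by rw [le_div_iff₀ h0]; linarith
    have h2 := rpow_one_add_le_one_add_mul_self hz hq.le h1
    have h3 : 1 + -e / (t + e) = t / (t + e) := by field_simp; ring
    rw [h3, Real.div_rpow ht h0.le, div_le_iff₀ (by positivity), ← mul_rpow_sub_one h0.le hq] at h2
    have h4 : (1 + q * (-e / (t + e))) * ((t + e) * (t + e) ^ (q - 1)) =
        (t + e) * (t + e) ^ (q - 1) - q * ((t + e) ^ (q - 1) * e) := by field_simp; ring
    linarith

lemma mul_rpow_sub_one_le {t r : ℝ} (ht : 0 ≤ t) (htr : t ≤ r) (q : ℝ) :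
    t * r ^ (q - 1) ≤ r ^ q := by
  rcases eq_or_lt_of_le (ht.trans htr) with rfl | hr
  · have : t = 0 := le_antisymm htr ht
    subst this
    simp; positivity
  · calc t * r ^ (q - 1) ≤ r * r ^ (q - 1) := by gcongr
      _ = r ^ q := by rw [Real.rpow_sub_one hr.ne']; field_simp

/-- A function of `r = ‖x‖ ^ 2 + t` and of the value `t` of the squared square function which
decreases in mean along a martingale, for suitable `A` and `K`. -/
noncomputable def burkholderFun (q A K r t : ℝ) : ℝ :=
  r ^ q - A * (t * r ^ (q - 1)) - K * t ^ q

/-- The coefficient of the first order term in the increments of `burkholderFun`. -/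
noncomputable def burkholderSlope (q A r t : ℝ) : ℝ :=
  2 * (q * r ^ (q - 1) - A * (q - 1) * (t * r ^ (q - 1 - 1)))

lemma abs_burkholderFun_le {q A K r t : ℝ} (hq : 0 ≤ q) (hA : 0 ≤ A) (hK : 0 ≤ K) (ht : 0 ≤ t)
    (htr : t ≤ r) : |burkholderFun q A K r t| ≤ (1 + A + K) * r ^ q := by
  have hr : 0 ≤ r := ht.trans htr
  have h1 := mul_le_mul_of_nonneg_left (mul_rpow_sub_one_le ht htr q) hA
  have h2 := mul_le_mul_of_nonneg_left (Real.rpow_le_rpow ht htr hq) hK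
  have h3 : 0 ≤ A * (t * r ^ (q - 1)) := by positivity
  have h4 : 0 ≤ K * t ^ q := by positivity
  have h5 : 0 ≤ r ^ q := by positivity
  unfold burkholderFun
  rw [abs_le]
  constructor <;> linarith

lemma abs_burkholderSlope_mul_le {q A r t e b : ℝ} (hq : 1 / 2 ≤ q) (hA : 0 ≤ A) (ht : 0 ≤ t)
    (htr : t ≤ r) (he : 0 ≤ e) (hb : b ^ 2 ≤ r * e) :
    |burkholderSlope q A r t * b| ≤ 2 * (q + A * |q - 1|) * (r + e) ^ q := by
  have hr : 0 ≤ r := ht.trans htr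
  have h1 := rpow_sub_one_mul_abs_le hq hr he hb
  have h2 := mul_rpow_sub_one_le ht htr (q - 1)
  have h3 : |burkholderSlope q A r t| ≤ 2 * (q + A * |q - 1|) * r ^ (q - 1) := by
    have hq0 : |q * r ^ (q - 1)| = q * r ^ (q - 1) := abs_of_nonneg (by positivity)
    have ht0 : |t * r ^ (q - 1 - 1)| = t * r ^ (q - 1 - 1) := abs_of_nonneg (by positivity)
    calc |burkholderSlope q A r t|
        ≤ 2 * (|q * r ^ (q - 1)| + |A * (q - 1) * (t * r ^ (q - 1 - 1))|) := by
          rw [burkholderSlope, abs_mul, abs_two]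
          gcongr
          exact abs_sub _ _
      _ = 2 * (q * r ^ (q - 1) + A * |q - 1| * (t * r ^ (q - 1 - 1))) := by
          rw [hq0, abs_mul, abs_mul, ht0, abs_of_nonneg hA]
      _ ≤ 2 * (q * r ^ (q - 1) + A * |q - 1| * r ^ (q - 1)) := by gcongr
      _ = _ := by ring
  calc |burkholderSlope q A r t * b| ≤ 2 * (q + A * |q - 1|) * r ^ (q - 1) * |b| := by
        rw [abs_mul]; gcongr
    _ = 2 * (q + A * |q - 1|) * (r ^ (q - 1) * |b|) := by ring
    _ ≤ _ := by gcongr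

lemma rpow_le_burkholderFun {q A r t : ℝ} (K : ℝ) (hq : 0 < q) (hA : 0 ≤ A) (ht : 0 ≤ t)
    (htr : t ≤ r) :
    r ^ q ≤ 2 * burkholderFun q A K r t + (2 * K + (1 + 2 * A) * (2 * A) ^ q) * t ^ q := by
  have hr : 0 ≤ r := ht.trans htr
  unfold burkholderFun
  have h1 : 0 ≤ (2 * A) ^ q * t ^ q := by positivity
  have h0 : 0 ≤ A * ((2 * A) ^ q * t ^ q) := by positivity
  rcases le_total (2 * A * t) r with h | h
  · have h2 : 2 * A * t * r ^ (q - 1) ≤ r ^ q := mul_rpow_sub_one_le (by positivity) h q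
    linarith
  · have h2 : r ^ q ≤ (2 * A) ^ q * t ^ q := by
      rw [← Real.mul_rpow (by positivity) ht]
      exact Real.rpow_le_rpow hr h hq.le
    have h3 := mul_le_mul_of_nonneg_left (mul_rpow_sub_one_le ht htr q) hA
    have h4 := mul_le_mul_of_nonneg_left h2 hA
    have h5 : 0 ≤ r ^ q := by positivity
    linarith

lemma exists_burkholderFun_step {q : ℝ} (hq : 1 / 2 ≤ q) :
    ∃ A K : ℝ, 0 ≤ A ∧ 0 ≤ K ∧ ∀ r t e b : ℝ, 0 ≤ t → t ≤ r → 0 ≤ e → b ^ 2 ≤ r * e →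
      burkholderFun q A K (r + 2 * b + 2 * e) (t + e) ≤
        burkholderFun q A K r t + burkholderSlope q A r t * b := by
  have hq0 : 0 < q := by linarith
  obtain ⟨C, hC⟩ : ∃ C, C = 2 * (3 ^ q + 2 * q) + 2 * (2 * q + 16 * (q ^ 2 * 5 ^ q)) := ⟨_, rfl⟩
  have hC0 : 0 ≤ C := by rw [hC]; positivity
  rcases le_total q 1 with hq1 | hq1
  · refine ⟨0, C / q, le_rfl, by positivity, fun r t e b ht htr he hb => ?_⟩
    have h1 := rpow_increment_le hq (ht.trans htr) he hb
    rw [← hC] at h1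
    have h2 := rpow_add_increment_ge hq0 ht he
    rw [min_eq_left hq1] at h2
    have h3 : (r + e) ^ (q - 1) * e ≤ (t + e) ^ (q - 1) * e := by
      rcases eq_or_lt_of_le he with rfl | he0
      · simp
      gcongr ?_ * _
      exact Real.rpow_le_rpow_of_nonpos (by linarith) (by linarith) (by linarith)
    have h4 := mul_le_mul_of_nonneg_left h2 (div_nonneg hC0 hq0.le)
    have h5 : C / q * (t ^ q + q * ((t + e) ^ (q - 1) * e)) =
        C / q * t ^ q + C * ((t + e) ^ (q - 1) * e) := by field_simp
    have h6 := mul_le_mul_of_nonneg_left h3 hC0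
    simp only [burkholderFun, burkholderSlope]
    linarith
  · have hs : 0 ≤ q - 1 := by linarith
    refine ⟨C * 3 ^ (q - 1), C * 3 ^ (q - 1) * (17 + 2 * (q - 1)), by positivity, by positivity,
      fun r t e b ht htr he hb => ?_⟩
    have hr := ht.trans htr
    have h1 := rpow_increment_le hq hr he hb
    rw [← hC] at h1
    have h2 := rpow_add_increment_ge hq0 ht he
    rw [min_eq_right hq1] at h2
    have h3 := mul_rpow_increment_ge hs ht htr he hb
    have habs : -(2 * b) ≤ r / 2 + 2 * e ∧ -(2 * b) ≤ r + e := by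
      constructor
      · have := abs_le_of_sq_le_sq' (a := b) (b := r / 4 + e)
          (by nlinarith [sq_nonneg (r / 4 - e)]) (by linarith)
        linarith
      · have := abs_le_of_sq_le_sq' (a := b) (b := (r + e) / 2)
          (by nlinarith [sq_nonneg (r - e)]) (by linarith)
        linarith
    have h4 : (r + e) ^ (q - 1) ≤ 3 ^ (q - 1) * (r + 2 * b + 2 * e) ^ (q - 1) := by
      rw [← Real.mul_rpow (by norm_num) (by linarith)]
      exact Real.rpow_le_rpow (by linarith) (by linarith) hs
    have h5 := mul_le_mul_of_nonneg_left (mul_le_mul_of_nonneg_right h4 he) hC0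
    have hA : 0 ≤ C * 3 ^ (q - 1) := by positivity
    have h6 := mul_le_mul_of_nonneg_left h3 hA
    have h7 := mul_le_mul_of_nonneg_left h2
      (show 0 ≤ C * 3 ^ (q - 1) * (17 + 2 * (q - 1)) by positivity)
    simp only [burkholderFun, burkholderSlope]
    linarith

lemma integral_inner_eq_zero_of_condExp_eq_zero {Ω E : Type*} [NormedAddCommGroup E]
    [InnerProductSpace ℝ E] [CompleteSpace E] {m m0 : MeasurableSpace Ω} {μ : Measure Ω}
    (hm : m ≤ m0) [SigmaFinite (μ.trim hm)] {f g : Ω → E} (hf : StronglyMeasurable[m] f)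
    (hfg : Integrable (fun ω => inner ℝ (f ω) (g ω)) μ) (hg : Integrable g μ)
    (hg0 : μ[g | m] =ᵐ[μ] 0) : ∫ ω, inner ℝ (f ω) (g ω) ∂μ = 0 := by
  have h : μ[fun ω => inner ℝ (f ω) (g ω) | m] =ᵐ[μ] fun ω => inner ℝ (f ω) (μ[g | m] ω) :=
    condExp_bilin_of_stronglyMeasurable_left (innerSL ℝ) hf hfg hg
  rw [← integral_condExp hm, integral_congr_ae h, integral_eq_zero_of_ae]
  filter_upwards [hg0] with ω hω
  simp [hω]

/-- Burkholder's inequality: for `p > 1` there is a constant `K_p` depending only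
on `p` such that for every complex martingale difference sequence `X`,
`E|Σ X_k|^p ≤ K_p E(Σ |X_k|²)^{p/2}`. -/
theorem burkholder_inequality (p : ℝ) (hp : 1 < p) :
    ∃ K : ℝ, 0 < K ∧
      ∀ (Ω : Type) (m0 : MeasurableSpace Ω) (μ : Measure Ω),
        IsProbabilityMeasure μ →
        ∀ (ℱ : Filtration ℕ m0) (X : ℕ → Ω → ℂ),
          Adapted ℱ X →
          (∀ k, Integrable (fun ω => ‖X k ω‖ ^ p) μ) →
          (μ[X 0 | (⊥ : MeasurableSpace Ω)] =ᵐ[μ] 0) →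
          (∀ k : ℕ, μ[X (k + 1) | ℱ k] =ᵐ[μ] 0) →
          ∀ n : ℕ,
            ∫ ω, ‖∑ k ∈ Finset.range n, X k ω‖ ^ p ∂μ ≤
              K * ∫ ω, (∑ k ∈ Finset.range n, ‖X k ω‖ ^ 2) ^ (p / 2) ∂μ := by
  obtain ⟨q, hq⟩ : ∃ q, q = p / 2 := ⟨_, rfl⟩
  have hq2 : 1 / 2 ≤ q := by linarith
  have hq0 : 0 < q := by linarith
  obtain ⟨A, K, hA, hK, hstep⟩ := exists_burkholderFun_step hq2
  have hL : 0 ≤ (1 + 2 * A) * (2 * A) ^ q := by positivity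
  refine ⟨2 * K + (1 + 2 * A) * (2 * A) ^ q + 1, by positivity, ?_⟩
  intro Ω m0 μ _ ℱ X hX hXp _ hX0 n
  rw [← hq]
  have hXm : ∀ k, Measurable (X k) := fun k => (hX k).mono (ℱ.le k) le_rfl
  have hXLp : ∀ k, MemLp (X k) (ENNReal.ofReal p) μ := fun k => by
    refine (integrable_norm_rpow_iff (hXm k).aestronglyMeasurable (by simp; linarith)
      (by simp)).1 ?_
    rw [ENNReal.toReal_ofReal (by linarith)]
    exact hXp k
  have hXi : ∀ k, Integrable (X k) μ := fun k => (hXLp k).integrable (by simp; linarith)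
  set S : ℕ → Ω → ℂ := fun n ω => ∑ k ∈ Finset.range n, X k ω with hS
  set Q : ℕ → Ω → ℝ := fun n ω => ∑ k ∈ Finset.range n, ‖X k ω‖ ^ 2 with hQ
  set N : ℕ → Ω → ℝ := fun n ω => ∑ k ∈ Finset.range n, ‖X k ω‖ with hN
  set R : ℕ → Ω → ℝ := fun n ω => ‖S n ω‖ ^ 2 + Q n ω with hR
  have hSm : ∀ n, Measurable (S n) := fun n => by fun_prop
  have hQm : ∀ n, Measurable (Q n) := fun n => by fun_prop
  have hRm : ∀ n, Measurable (R n) := fun n => by fun_prop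
  have hN0 : ∀ n ω, 0 ≤ N n ω := fun n ω => by positivity
  have hQ0 : ∀ n ω, 0 ≤ Q n ω := fun n ω => by positivity
  have hQR : ∀ n ω, Q n ω ≤ R n ω := fun n ω => by
    have : 0 ≤ ‖S n ω‖ ^ 2 := by positivity
    simp only [hR]; linarith
  have hSQ : ∀ n ω, ‖S n ω‖ ^ 2 ≤ R n ω := fun n ω => by
    simp only [hR]; linarith [hQ0 n ω]
  have hR0 : ∀ n ω, 0 ≤ R n ω := fun n ω => (hQ0 n ω).trans (hQR n ω)
  have hRN : ∀ n ω, R n ω ≤ 2 * N n ω ^ 2 := fun n ω => by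
    have h1 : ‖S n ω‖ ^ 2 ≤ N n ω ^ 2 := by
      gcongr
      exact norm_sum_le _ _
    have h2 : Q n ω ≤ N n ω ^ 2 := Finset.sum_sq_le_sq_sum_of_nonneg fun _ _ => norm_nonneg _
    simp only [hR]; linarith
  have hNi : ∀ n, Integrable (fun ω => (2 * N n ω ^ 2) ^ q) μ := fun n => by
    have h1 : MemLp (N n) (ENNReal.ofReal p) μ := memLp_finsetSum _ fun k _ => (hXLp k).norm
    have h2 := (h1.integrable_norm_rpow (by simp; linarith) (by simp)).const_mul ((2 : ℝ) ^ q)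
    refine h2.congr (.of_forall fun ω => ?_)
    simp only
    rw [ENNReal.toReal_ofReal (by linarith), Real.norm_of_nonneg (hN0 n ω),
      Real.mul_rpow (by norm_num) (by positivity), ← Real.rpow_natCast, ← Real.rpow_mul (hN0 n ω),
      hq]
    congr 2; push_cast; ring
  have hRi : ∀ n, Integrable (fun ω => R n ω ^ q) μ := fun n => by
    refine (hNi n).mono' ((hRm n).pow_const q).aestronglyMeasurable (.of_forall fun ω => ?_)
    rw [Real.norm_of_nonneg (Real.rpow_nonneg (hR0 n ω) q)]
    exact Real.rpow_le_rpow (hR0 n ω) (hRN n ω) hq0.le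
  have hUi : ∀ n, Integrable (fun ω => burkholderFun q A K (R n ω) (Q n ω)) μ := fun n => by
    refine ((hRi n).const_mul (1 + A + K)).mono' ?_ (.of_forall fun ω => ?_)
    · unfold burkholderFun; fun_prop
    · exact abs_burkholderFun_le hq0.le hA hK (hQ0 n ω) (hQR n ω)
  have hinner : ∀ n ω, (inner ℝ (S n ω) (X n ω)) ^ 2 ≤ R n ω * ‖X n ω‖ ^ 2 := fun n ω => by
    have h1 : (inner ℝ (S n ω) (X n ω)) ^ 2 ≤ (‖S n ω‖ * ‖X n ω‖) ^ 2 :=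
      sq_le_sq.2 ((abs_real_inner_le_norm _ _).trans (le_abs_self _))
    rw [mul_pow] at h1
    exact h1.trans (by gcongr; exact hSQ n ω)
  have hlin_i : ∀ n, Integrable
      (fun ω => burkholderSlope q A (R n ω) (Q n ω) * inner ℝ (S n ω) (X n ω)) μ := fun n => by
    refine ((hNi (n + 1)).const_mul (2 * (q + A * |q - 1|))).mono' ?_ (.of_forall fun ω => ?_)
    · unfold burkholderSlope; fun_prop
    · refine (abs_burkholderSlope_mul_le hq2 hA (hQ0 n ω) (hQR n ω) (sq_nonneg _)
        (hinner n ω)).trans ?_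
      have h0 := hR0 n ω
      have h1 := hRN n ω
      have h2 : N (n + 1) ω = N n ω + ‖X n ω‖ := Finset.sum_range_succ _ _
      have h3 : R n ω + ‖X n ω‖ ^ 2 ≤ 2 * N (n + 1) ω ^ 2 := by
        rw [h2]
        nlinarith [mul_nonneg (hN0 n ω) (norm_nonneg (X n ω)), sq_nonneg ‖X n ω‖]
      gcongr
  have hlin : ∀ n, ∫ ω, burkholderSlope q A (R n ω) (Q n ω) * inner ℝ (S n ω) (X n ω) ∂μ = 0 := by
    intro n
    cases n with
    | zero => simp [hS]
    | succ k =>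
      have hXk : ∀ j ∈ Finset.range (k + 1), StronglyMeasurable[ℱ k] (X j) := fun j hj =>
        (hX j).stronglyMeasurable.mono (ℱ.mono (Nat.lt_succ_iff.1 (Finset.mem_range.1 hj)))
      have hSk : StronglyMeasurable[ℱ k] (S (k + 1)) := Finset.stronglyMeasurable_fun_sum _ hXk
      have hQk : StronglyMeasurable[ℱ k] (Q (k + 1)) :=
        Finset.stronglyMeasurable_fun_sum _ fun j hj => (hXk j hj).norm.pow 2
      have hQk' := hQk.measurable
      have hRk : Measurable[ℱ k] (R (k + 1)) := ((hSk.norm.pow 2).add hQk).measurable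
      have hslope : Measurable[ℱ k] fun ω =>
          burkholderSlope q A (R (k + 1) ω) (Q (k + 1) ω) := by
        unfold burkholderSlope; fun_prop
      have hint := hlin_i (k + 1)
      simp only [← real_inner_smul_left] at hint ⊢
      exact integral_inner_eq_zero_of_condExp_eq_zero (ℱ.le k)
        (hslope.stronglyMeasurable.smul hSk) hint (hXi _) (hX0 k)
  have hU : ∀ n, ∫ ω, burkholderFun q A K (R n ω) (Q n ω) ∂μ ≤ 0 := by
    intro n
    induction n with
    | zero => simp [burkholderFun, hR, hQ, hS, Real.zero_rpow hq0.ne']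
    | succ n ih =>
      calc ∫ ω, burkholderFun q A K (R (n + 1) ω) (Q (n + 1) ω) ∂μ
          ≤ ∫ ω, (burkholderFun q A K (R n ω) (Q n ω) +
              burkholderSlope q A (R n ω) (Q n ω) * inner ℝ (S n ω) (X n ω)) ∂μ := by
            refine integral_mono (hUi _) ((hUi n).add (hlin_i n)) fun ω => ?_
            have h1 : Q (n + 1) ω = Q n ω + ‖X n ω‖ ^ 2 := Finset.sum_range_succ _ _
            have h2 : S (n + 1) ω = S n ω + X n ω := Finset.sum_range_succ _ _
            have h3 : R (n + 1) ω =
                R n ω + 2 * inner ℝ (S n ω) (X n ω) + 2 * ‖X n ω‖ ^ 2 := by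
              simp only [hR]
              rw [h1, h2, norm_add_sq_real]; ring
            simp only
            rw [h1, h3]
            exact hstep _ _ _ _ (hQ0 n ω) (hQR n ω) (sq_nonneg _) (hinner n ω)
        _ ≤ 0 := by rw [integral_add (hUi n) (hlin_i n), hlin n, add_zero]; exact ih
  have hQi : Integrable (fun ω => Q n ω ^ q) μ := by
    refine (hRi n).mono' ((hQm n).pow_const q).aestronglyMeasurable (.of_forall fun ω => ?_)
    rw [Real.norm_of_nonneg (Real.rpow_nonneg (hQ0 n ω) q)]
    exact Real.rpow_le_rpow (hQ0 n ω) (hQR n ω) hq0.le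
  have hSR : ∀ ω, ‖S n ω‖ ^ p ≤ R n ω ^ q := fun ω => by
    have : ‖S n ω‖ ^ p = (‖S n ω‖ ^ 2) ^ q := by
      rw [← Real.rpow_natCast, ← Real.rpow_mul (norm_nonneg _), hq]
      congr 1; push_cast; ring
    rw [this]
    exact Real.rpow_le_rpow (by positivity) (hSQ n ω) hq0.le
  have hQint : 0 ≤ ∫ ω, Q n ω ^ q ∂μ :=
    integral_nonneg fun ω => Real.rpow_nonneg (hQ0 n ω) q
  calc ∫ ω, ‖S n ω‖ ^ p ∂μ
      ≤ ∫ ω, (2 * burkholderFun q A K (R n ω) (Q n ω) +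
          (2 * K + (1 + 2 * A) * (2 * A) ^ q) * Q n ω ^ q) ∂μ := by
        refine integral_mono_of_nonneg (.of_forall fun ω => Real.rpow_nonneg (norm_nonneg _) p)
          (((hUi n).const_mul 2).add (hQi.const_mul _)) (.of_forall fun ω => ?_)
        exact (hSR ω).trans (rpow_le_burkholderFun K hq0 hA (hQ0 n ω) (hQR n ω))
    _ = 2 * ∫ ω, burkholderFun q A K (R n ω) (Q n ω) ∂μ +
          (2 * K + (1 + 2 * A) * (2 * A) ^ q) * ∫ ω, Q n ω ^ q ∂μ := by
        rw [integral_add ((hUi n).const_mul 2) (hQi.const_mul _), integral_const_mul,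
          integral_const_mul]
    _ ≤ (2 * K + (1 + 2 * A) * (2 * A) ^ q + 1) * ∫ ω, Q n ω ^ q ∂μ := by
        linarith [hU n]
end
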